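/- Assume E₀, U, L, K satisfy the hypothesis and define h := {(x,y) ∈ BD(G) ⊕ BD(G) : π*_{BD(G)}x ∈ E₀ and K^⋄Kπ*_{BD(G)}x − L^⋄π*_{BD(D)}Ġy ∈ E}. Then for all (u,v) ∈ h and (x,y) ∈ h one has ⟨y,u⟩_{BD(G)} = ⟨Kπ*_{BD(G)}x, Kπ*_{BD(G)}u⟩_U. -/

import Mathlib

open scoped ComplexInnerProductSpace
open Filter Topology Classical

noncomputable section

variable {E H : Type*}
  [NormedAddCommGroup E] [InnerProductSpace ℂ E] [CompleteSpace E]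
  [NormedAddCommGroup H] [InnerProductSpace ℂ H] [CompleteSpace H]

/-- The operator `G := (−D₀)*`. -/
def Gop (D₀ : H →ₗ.[ℂ] E) : E →ₗ.[ℂ] H := (-D₀).adjoint

/-- The operator `D := −(G₀)*`. -/
def Dop (G₀ : E →ₗ.[ℂ] H) : H →ₗ.[ℂ] E := -(G₀.adjoint)

/-- Pointwise application of `G`, defined to be `0` off the domain. -/
def Gap (D₀ : H →ₗ.[ℂ] E) (u : E) : H :=
  if h : u ∈ (Gop D₀).domain then Gop D₀ ⟨u, h⟩ else 0

/-- Pointwise application of `D`, defined to be `0` off the domain. -/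
def Dap (G₀ : E →ₗ.[ℂ] H) (w : H) : E :=
  if h : w ∈ (Dop G₀).domain then Dop G₀ ⟨w, h⟩ else 0

/-- The graph inner product of `D_G`: `⟪x,y⟫_E + ⟪Gx,Gy⟫_H`. -/
def innG (D₀ : H →ₗ.[ℂ] E) (x y : E) : ℂ := ⟪x, y⟫ + ⟪Gap D₀ x, Gap D₀ y⟫

/-- The graph inner product of `D_D`: `⟪x,y⟫_H + ⟪Dx,Dy⟫_E`. -/
def innD (G₀ : E →ₗ.[ℂ] H) (x y : H) : ℂ := ⟪x, y⟫ + ⟪Dap G₀ x, Dap G₀ y⟫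

/-- The boundary data space `BD(G)`, the orthogonal complement of `D(G₀)` in `D_G`. -/
def BDG (G₀ : E →ₗ.[ℂ] H) (D₀ : H →ₗ.[ℂ] E) : Set E :=
  {u | u ∈ (Gop D₀).domain ∧ ∀ v ∈ G₀.domain, innG D₀ u v = 0}

/-- The boundary data space `BD(D)`, the orthogonal complement of `D(D₀)` in `D_D`. -/
def BDD (G₀ : E →ₗ.[ℂ] H) (D₀ : H →ₗ.[ℂ] E) : Set H :=
  {w | w ∈ (Dop G₀).domain ∧ ∀ v ∈ D₀.domain, innD G₀ w v = 0}

variable {U E₀ : Type*}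
  [NormedAddCommGroup U] [InnerProductSpace ℂ U] [CompleteSpace U]
  [NormedAddCommGroup E₀] [InnerProductSpace ℂ E₀] [CompleteSpace E₀]

/-- Closedness of the operator `(L,K) : E₀ ⊆ E → H ⊕ U`: whenever `wₙ` in `E₀` with `wₙ → w`
in `E`, `Lwₙ → v` in `H` and `Kwₙ → z` in `U`, then `w ∈ E₀`, `Lw = v` and `Kw = z`. -/
def ClosedLK (j : E₀ →L[ℂ] E) (L : E₀ →L[ℂ] H) (K : E₀ →L[ℂ] U) : Prop :=
  ∀ (f : ℕ → E₀) (w : E) (v : H) (z : U),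
    Tendsto (fun n => j (f n)) atTop (nhds w) →
    Tendsto (fun n => L (f n)) atTop (nhds v) →
    Tendsto (fun n => K (f n)) atTop (nhds z) →
    ∃ w₀ : E₀, j w₀ = w ∧ L w₀ = v ∧ K w₀ = z

/-- The boundary relation `h` associated with `A`:
`h = {(x,y) ∈ BD(G) ⊕ BD(G) : π*x ∈ E₀, K^⋄Kπ*x − L^⋄π*Ġy ∈ E}`. -/
def hRel (G₀ : E →ₗ.[ℂ] H) (D₀ : H →ₗ.[ℂ] E) (j : E₀ →L[ℂ] E) (L : E₀ →L[ℂ] H)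
    (K : E₀ →L[ℂ] U) : Set (E × E) :=
  {p | p.1 ∈ BDG G₀ D₀ ∧ p.2 ∈ BDG G₀ D₀ ∧
    ∃ x₀ : E₀, j x₀ = p.1 ∧
      ∃ e : E, ∀ z : E₀, (⟪e, j z⟫ : ℂ) = ⟪K x₀, K z⟫ - ⟪Gap D₀ p.2, L z⟫}

/-!
Let `(x, y) ∈ h` and let `e ∈ E` represent `K^⋄Kx − L^⋄Gy`. Tested against `v ∈ D(G₀)`, where `K`
vanishes and `L` agrees with `G`, the representation says `⟪e, v⟫ = -⟪Gy, Gv⟫`, and the right-hand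
side is `⟪y, v⟫` because `y` is orthogonal to `D(G₀)` in `D_G`. As `D(G₀)` is dense in `E`, this
forces `e = y`. Testing the same representation against an arbitrary `u ∈ E₀` now gives
`⟪y, u⟫ + ⟪Gy, Gu⟫ = ⟪Kx, Ku⟫`.
-/

section Representation

open scoped InnerProductSpace

variable {𝕜 V W X Z : Type*} [RCLike 𝕜]
  [NormedAddCommGroup V] [InnerProductSpace 𝕜 V]
  [SeminormedAddCommGroup W] [InnerProductSpace 𝕜 W]
  [SeminormedAddCommGroup X] [InnerProductSpace 𝕜 X]

variable (𝕜) in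
/-- The vector `e` represents the functional `K^⋄k − L^⋄g` on `Z` through `j : Z → V`, so that the
paper's `K^⋄k − L^⋄g ∈ E` reads `∃ e, RepresentsDiamondSub ℂ j L K k g e`. The maps need not be
linear. -/
def RepresentsDiamondSub (j : Z → V) (L : Z → W) (K : Z → X) (k : X) (g : W) (e : V) : Prop :=
  ∀ z, ⟪e, j z⟫_𝕜 = ⟪k, K z⟫_𝕜 - ⟪g, L z⟫_𝕜

variable {j : Z → V} {L : Z → W} {K : Z → X} {k : X} {g : W} {e y : V} {T : Set Z}

theorem RepresentsDiamondSub.eq_of_dense_image (he : RepresentsDiamondSub 𝕜 j L K k g e)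
    (hT : Dense (j '' T)) (hK : ∀ z ∈ T, K z = 0)
    (hy : ∀ z ∈ T, ⟪y, j z⟫_𝕜 + ⟪g, L z⟫_𝕜 = 0) : e = y := by
  refine hT.eq_of_inner_left (𝕜 := 𝕜) ?_
  rintro _ ⟨z, hz, rfl⟩
  calc ⟪e, j z⟫_𝕜 = ⟪k, K z⟫_𝕜 - ⟪g, L z⟫_𝕜 := he z
    _ = -⟪g, L z⟫_𝕜 := by rw [hK z hz, inner_zero_right, zero_sub]
    _ = ⟪y, j z⟫_𝕜 := (eq_neg_of_add_eq_zero_left (hy z hz)).symm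

theorem RepresentsDiamondSub.inner_add_inner_eq (he : RepresentsDiamondSub 𝕜 j L K k g e) (z : Z) :
    ⟪e, j z⟫_𝕜 + ⟪g, L z⟫_𝕜 = ⟪k, K z⟫_𝕜 :=
  eq_sub_iff_add_eq.mp (he z)

end Representation

section BoundaryRelation

omit [CompleteSpace E] [CompleteSpace U] [CompleteSpace E₀]

variable {G₀ : E →ₗ.[ℂ] H} {D₀ : H →ₗ.[ℂ] E} {j : E₀ →L[ℂ] E} {L : E₀ →L[ℂ] H} {K : E₀ →L[ℂ] U}

theorem exists_representsDiamondSub_of_mem_hRel (hj_inj : Function.Injective j) {x₀ : E₀} {y : E}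
    (h : (j x₀, y) ∈ hRel G₀ D₀ j L K) :
    ∃ e, RepresentsDiamondSub ℂ j L K (K x₀) (Gap D₀ y) e := by
  obtain ⟨-, -, x₁, hx₁, he⟩ := h
  obtain rfl : x₁ = x₀ := hj_inj hx₁
  exact he

theorem representsDiamondSub_of_mem_hRel (hG₀dense : Dense (G₀.domain : Set E))
    (hj_inj : Function.Injective j) (hL : ∀ z, L z = Gap D₀ (j z))
    (hG₀subL : ∀ u ∈ G₀.domain, ∃ z, j z = u) (hK0 : ∀ z, j z ∈ G₀.domain → K z = 0)
    {x₀ : E₀} {y : E} (h : (j x₀, y) ∈ hRel G₀ D₀ j L K) :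
    RepresentsDiamondSub ℂ j L K (K x₀) (Gap D₀ y) y := by
  obtain ⟨e, he⟩ := exists_representsDiamondSub_of_mem_hRel hj_inj h
  have hdense : Dense (j '' (j ⁻¹' G₀.domain)) := by
    rwa [Set.image_preimage_eq_of_subset hG₀subL]
  have hy : ∀ z, j z ∈ G₀.domain → ⟪y, j z⟫ + ⟪Gap D₀ y, L z⟫ = 0 := fun z hz ↦ by
    rw [hL z]
    exact h.2.1.2 (j z) hz
  exact he.eq_of_dense_image hdense hK0 hy ▸ he

theorem hRel_inner_eq_general (hG₀dense : Dense (G₀.domain : Set E))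
    (_hD₀dense : Dense (D₀.domain : Set H)) (hj_inj : Function.Injective j)
    (hLsubG : ∀ z, j z ∈ (Gop D₀).domain ∧ L z = Gap D₀ (j z))
    (hG₀subL : ∀ u ∈ G₀.domain, ∃ z, j z = u) (hK0 : ∀ z, j z ∈ G₀.domain → K z = 0)
    {x₀ : E₀} {y : E} (h : (j x₀, y) ∈ hRel G₀ D₀ j L K) (u₀ : E₀) :
    innG D₀ y (j u₀) = ⟪K x₀, K u₀⟫ := by
  have hL : ∀ z, L z = Gap D₀ (j z) := fun z ↦ (hLsubG z).2
  have hrep := representsDiamondSub_of_mem_hRel hG₀dense hj_inj hL hG₀subL hK0 h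
  rw [innG, ← hL u₀]
  exact hrep.inner_add_inner_eq u₀

end BoundaryRelation

/-- For all `(u,v) ∈ h` and `(x,y) ∈ h` one has
`⟪y,u⟫_{BD(G)} = ⟪Kπ*_{BD(G)}x, Kπ*_{BD(G)}u⟫_U`. -/
theorem hRel_inner_eq (G₀ : E →ₗ.[ℂ] H) (D₀ : H →ₗ.[ℂ] E)
    (hG₀dense : Dense (G₀.domain : Set E)) (hD₀dense : Dense (D₀.domain : Set H))
    (hG₀closed : G₀.IsClosed) (hD₀closed : D₀.IsClosed)
    (hsub : G₀ ≤ Gop D₀)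
    (j : E₀ →L[ℂ] E) (L : E₀ →L[ℂ] H) (K : E₀ →L[ℂ] U)
    (hj_inj : Function.Injective j) (hj_dense : DenseRange j)
    (hclosed : ClosedLK j L K)
    (hLsubG : ∀ x : E₀, j x ∈ (Gop D₀).domain ∧ L x = Gap D₀ (j x))
    (hG₀subL : ∀ u ∈ G₀.domain, ∃ x : E₀, j x = u)
    (hK0 : ∀ x : E₀, j x ∈ G₀.domain → K x = 0) :
    ∀ p ∈ hRel G₀ D₀ j L K, ∀ q ∈ hRel G₀ D₀ j L K,
      ∀ u₀ x₀ : E₀, j u₀ = p.1 → j x₀ = q.1 →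
        innG D₀ q.2 p.1 = ⟪K x₀, K u₀⟫ := by
  rintro ⟨_, v⟩ - ⟨_, y⟩ hxy u₀ x₀ rfl rfl
  exact hRel_inner_eq_general hG₀dense hD₀dense hj_inj hLsubG hG₀subL hK0 hxy u₀
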